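/- For every integer n ≥ 1, quantum correlations are not n-chotomic: there exist integers m ≥ 1, r ≥ 1 and an m-chotomic quantum correlation Q ∈ 𝒫₂[m,r] such that I'(Q) < inf{ I'(P) : r' ≥ 1, P ∈ 𝒫₂[n,r'] }. In particular, Q cannot be obtained, or even approximated in the value of I', by n-chotomic quantum correlations with any number of outcomes. -/

import Mathlib

open Matrix Kronecker BigOperators
open scoped ComplexOrder

noncomputable section

/-- A bipartite correlation with two settings per party (`μ ν : Fin 2`, where index
`0` is setting 1 and index `1` is setting 2) and `r` outcomes per setting
(`k ℓ : Fin r`, where index `i` is outcome `i+1`): all probabilities are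
nonnegative and, for each pair of settings, they sum to one. -/
def IsCorrelation (r : ℕ) (P : Fin 2 → Fin 2 → Fin r → Fin r → ℝ) : Prop :=
  (∀ μ ν k ℓ, 0 ≤ P μ ν k ℓ) ∧ (∀ μ ν, ∑ k, ∑ ℓ, P μ ν k ℓ = 1)

/-- The Zohren–Gill expression
`I'(P) = P₂₂(k<ℓ) + P₁₂(k>ℓ) + P₁₁(k<ℓ) + P₂₁(k≥ℓ)`. -/
def ZG {r : ℕ} (P : Fin 2 → Fin 2 → Fin r → Fin r → ℝ) : ℝ :=
    (∑ k, ∑ ℓ, if k < ℓ then P 1 1 k ℓ else 0)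
  + (∑ k, ∑ ℓ, if ℓ < k then P 0 1 k ℓ else 0)
  + (∑ k, ∑ ℓ, if k < ℓ then P 0 0 k ℓ else 0)
  + (∑ k, ∑ ℓ, if ℓ ≤ k then P 1 0 k ℓ else 0)

/-- `P ∈ 𝒫₂[n,r]`: `P` is an `n`-chotomic quantum correlation with two settings per
party and `r` outcomes per setting.  There are a finite index set `Fin a`,
dimensions `dA, dB ≥ 1`, positive semidefinite states `η α` on the tensor product
space with total trace one, and for each setting positive semidefinite local
measurement operators summing to the identity with at most `n` nonzero members
for each `α`, reproducing `P` via the Born rule. -/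
def IsNChotomicQC (n r : ℕ) (P : Fin 2 → Fin 2 → Fin r → Fin r → ℝ) : Prop :=
  IsCorrelation r P ∧
  ∃ (a dA dB : ℕ), 1 ≤ dA ∧ 1 ≤ dB ∧
  ∃ (η : Fin a → Matrix (Fin dA × Fin dB) (Fin dA × Fin dB) ℂ)
    (DA : Fin 2 → Fin a → Fin r → Matrix (Fin dA) (Fin dA) ℂ)
    (DB : Fin 2 → Fin a → Fin r → Matrix (Fin dB) (Fin dB) ℂ),
    (∀ α, (η α).PosSemidef) ∧ (∑ α, (η α).trace) = 1 ∧
    (∀ μ α k, (DA μ α k).PosSemidef) ∧ (∀ μ α, ∑ k, DA μ α k = 1) ∧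
    (∀ μ α, {k | DA μ α k ≠ 0}.ncard ≤ n) ∧
    (∀ ν α k, (DB ν α k).PosSemidef) ∧ (∀ ν α, ∑ k, DB ν α k = 1) ∧
    (∀ ν α, {k | DB ν α k ≠ 0}.ncard ≤ n) ∧
    (∀ μ ν k ℓ, (P μ ν k ℓ : ℂ) = ∑ α, (η α * (DA μ α k ⊗ₖ DB ν α ℓ)).trace)

/-- `q_{n,r} = inf { I'(P) : P ∈ 𝒫₂[n,r] }`. -/
def qnr (n r : ℕ) : ℝ := sInf {x | ∃ P, IsNChotomicQC n r P ∧ ZG P = x}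

/-- `q_n = inf { q_{n,r} : r ≥ n }`. -/
def qn (n : ℕ) : ℝ := sInf {x | ∃ r, n ≤ r ∧ qnr n r = x}

/-- The no-signaling condition for a bipartite correlation. -/
def NoSignaling (r : ℕ) (P : Fin 2 → Fin 2 → Fin r → Fin r → ℝ) : Prop :=
  (∀ μ k, ∑ ℓ, P μ 0 k ℓ = ∑ ℓ, P μ 1 k ℓ) ∧
  (∀ ν ℓ, ∑ k, P 0 ν k ℓ = ∑ k, P 1 ν k ℓ)

/-- Merging the last outcome (outcome `r+1`, index `Fin.last r`) with the first
outcome (index `0`) on both parties, turning a correlation with `r+1` outcomes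
into one with `r` outcomes. -/
def mergeLast {r : ℕ} (P : Fin 2 → Fin 2 → Fin (r+1) → Fin (r+1) → ℝ) :
    Fin 2 → Fin 2 → Fin r → Fin r → ℝ :=
  fun μ ν k ℓ =>
    P μ ν k.castSucc ℓ.castSucc
    + (if (k : ℕ) = 0 then P μ ν (Fin.last r) ℓ.castSucc else 0)
    + (if (ℓ : ℕ) = 0 then P μ ν k.castSucc (Fin.last r) else 0)
    + (if (k : ℕ) = 0 ∧ (ℓ : ℕ) = 0 then P μ ν (Fin.last r) (Fin.last r) else 0)

theorem PosSemidef.trace_mul_nonneg {ι : Type*} [Fintype ι] {A B : Matrix ι ι ℂ}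
    (hA : A.PosSemidef) (hB : B.PosSemidef) : 0 ≤ (A * B).trace := by
  classical
  obtain ⟨m, v, rfl⟩ := Matrix.posSemidef_iff_eq_sum_vecMulVec.mp hA
  rw [Finset.sum_mul, Matrix.trace_sum]
  refine Finset.sum_nonneg fun i _ => ?_
  rw [Matrix.vecMulVec_mul, Matrix.trace_vecMulVec, dotProduct_comm, ← Matrix.dotProduct_mulVec]
  exact hB.dotProduct_mulVec_nonneg _

/-- Alice's marginal of the Born rule does not depend on Bob's measurement. -/
theorem sum_trace_mul_kronecker_right {ι κ : Type*} [Fintype ι] [Fintype κ] [DecidableEq κ] {r : ℕ}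
    (η : Matrix (ι × κ) (ι × κ) ℂ) (A : Matrix ι ι ℂ) (B : Fin r → Matrix κ κ ℂ)
    (hB : ∑ l, B l = 1) :
    ∑ l, (η * (A ⊗ₖ B l)).trace = (η * (A ⊗ₖ (1 : Matrix κ κ ℂ))).trace := by
  rw [← Matrix.trace_sum, ← Finset.mul_sum, ← hB]
  congr 2
  ext ⟨i, j⟩ ⟨i', j'⟩
  simp [Matrix.sum_apply, Matrix.kroneckerMap_apply, Finset.mul_sum]

/-- Bob's marginal of the Born rule does not depend on Alice's measurement. -/
theorem sum_trace_mul_kronecker_left {ι κ : Type*} [Fintype ι] [Fintype κ] [DecidableEq ι] {r : ℕ}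
    (η : Matrix (ι × κ) (ι × κ) ℂ) (A : Fin r → Matrix ι ι ℂ) (B : Matrix κ κ ℂ)
    (hA : ∑ k, A k = 1) :
    ∑ k, (η * (A k ⊗ₖ B)).trace = (η * ((1 : Matrix ι ι ℂ) ⊗ₖ B)).trace := by
  rw [← Matrix.trace_sum, ← Finset.mul_sum, ← hA]
  congr 2
  ext ⟨i, j⟩ ⟨i', j'⟩
  simp [Matrix.sum_apply, Matrix.kroneckerMap_apply, Finset.sum_mul]

theorem sum_sum_trace_mul_kronecker {ι κ : Type*} [Fintype ι] [Fintype κ] [DecidableEq ι]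
    [DecidableEq κ] {r : ℕ} (η : Matrix (ι × κ) (ι × κ) ℂ) (A : Fin r → Matrix ι ι ℂ)
    (B : Fin r → Matrix κ κ ℂ) (hA : ∑ k, A k = 1) (hB : ∑ l, B l = 1) :
    ∑ k, ∑ l, (η * (A k ⊗ₖ B l)).trace = η.trace := by
  simp_rw [sum_trace_mul_kronecker_right η _ B hB]
  rw [sum_trace_mul_kronecker_left η A 1 hA, Matrix.one_kronecker_one, mul_one]

/-- In any pair of jointly distributed variables, the upper tail of the second exceeds that of the
first by at most the probability that the second is larger. -/
theorem sum_tail_le {r : ℕ} (f : Fin r → Fin r → ℝ) (hf : ∀ k l, 0 ≤ f k l) (t : Fin r) :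
    (∑ l, if t ≤ l then ∑ k, f k l else 0) ≤
      (∑ k, if t ≤ k then ∑ l, f k l else 0) + ∑ k, ∑ l, if k < l then f k l else 0 := by
  have h1 : (∑ l, if t ≤ l then ∑ k, f k l else 0) = ∑ k, ∑ l, if t ≤ l then f k l else 0 := by
    rw [Finset.sum_comm]
    refine Finset.sum_congr rfl fun l _ => ?_
    split_ifs <;> simp
  have h2 : (∑ k, if t ≤ k then ∑ l, f k l else 0) = ∑ k, ∑ l, if t ≤ k then f k l else 0 := by
    refine Finset.sum_congr rfl fun l _ => ?_
    split_ifs <;> simp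
  rw [h1, h2, ← Finset.sum_add_distrib]
  refine Finset.sum_le_sum fun k _ => ?_
  rw [← Finset.sum_add_distrib]
  refine Finset.sum_le_sum fun l _ => ?_
  have := hf k l
  by_cases h : t ≤ l <;> by_cases h' : t ≤ k <;> by_cases h'' : k < l <;>
    simp only [h, h', h'', if_true, if_false] <;> first | linarith | (exfalso; order)

/-- Variant of `sum_tail_le` comparing a closed tail with an open one. -/
theorem sum_tail_le_open {r : ℕ} (f : Fin r → Fin r → ℝ) (hf : ∀ k l, 0 ≤ f k l) (t : Fin r) :
    (∑ k, if t ≤ k then ∑ l, f k l else 0) ≤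
      (∑ l, if t < l then ∑ k, f k l else 0) + ∑ k, ∑ l, if l ≤ k then f k l else 0 := by
  have h1 : (∑ l, if t < l then ∑ k, f k l else 0) = ∑ k, ∑ l, if t < l then f k l else 0 := by
    rw [Finset.sum_comm]
    refine Finset.sum_congr rfl fun l _ => ?_
    split_ifs <;> simp
  have h2 : (∑ k, if t ≤ k then ∑ l, f k l else 0) = ∑ k, ∑ l, if t ≤ k then f k l else 0 := by
    refine Finset.sum_congr rfl fun l _ => ?_
    split_ifs <;> simp
  rw [h1, h2, ← Finset.sum_add_distrib]
  refine Finset.sum_le_sum fun k _ => ?_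
  rw [← Finset.sum_add_distrib]
  refine Finset.sum_le_sum fun l _ => ?_
  have := hf k l
  by_cases h : t < l <;> by_cases h' : t ≤ k <;> by_cases h'' : l ≤ k <;>
    simp only [h, h', h'', if_true, if_false] <;> first | linarith | (exfalso; order)

/-- No-signaling bounds every outcome probability of Bob's first setting by the value of `ZG`. -/
theorem marginal_le_ZG {r : ℕ} (p : Fin 2 → Fin 2 → Fin r → Fin r → ℝ)
    (hp : ∀ μ ν k l, 0 ≤ p μ ν k l) (hns : NoSignaling r p) (t : Fin r) :
    ∑ k, p 0 0 k t ≤ ZG p := by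
  have hsplit : (∑ l, if t ≤ l then ∑ k, p 0 0 k l else 0) =
      (∑ l, if t < l then ∑ k, p 0 0 k l else 0) + ∑ k, p 0 0 k t := by
    have : ∑ k, p 0 0 k t = ∑ l, if l = t then ∑ k, p 0 0 k l else 0 := by simp
    rw [this, ← Finset.sum_add_distrib]
    refine Finset.sum_congr rfl fun l _ => ?_
    by_cases h : t ≤ l <;> by_cases h' : t < l <;> by_cases h'' : l = t <;>
      simp only [h, h', h'', if_true, if_false] <;> first | (simp; done) | (exfalso; order)
  have h00 := sum_tail_le (p 0 0) (hp 0 0) t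
  have h01 := sum_tail_le (fun l k => p 0 1 k l) (fun l k => hp 0 1 k l) t
  have h11 := sum_tail_le (p 1 1) (hp 1 1) t
  have h10 := sum_tail_le_open (p 1 0) (hp 1 0) t
  rw [Finset.sum_comm (f := fun l k => if l < k then p 0 1 k l else 0)] at h01
  simp only [hns.1, hns.2] at h00 h01 h11 h10 hsplit ⊢
  unfold ZG
  linarith

theorem sum_le_mul_ZG {r n : ℕ} (p : Fin 2 → Fin 2 → Fin r → Fin r → ℝ)
    (hp : ∀ μ ν k l, 0 ≤ p μ ν k l) (hns : NoSignaling r p) (s : Set (Fin r))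
    (hs : s.ncard ≤ n) (h0 : ∀ k, ∀ l ∉ s, p 0 0 k l = 0) :
    ∑ k, ∑ l, p 0 0 k l ≤ n * ZG p := by
  classical
  have hZ : 0 ≤ ZG p := by
    unfold ZG
    have h : ∀ (c : Prop) [Decidable c] (μ ν : Fin 2) (k l : Fin r),
        0 ≤ if c then p μ ν k l else 0 := by
      intro c _ μ ν k l; split_ifs; exacts [hp _ _ _ _, le_rfl]
    have (μ ν : Fin 2) (c : Fin r → Fin r → Prop) [∀ k l, Decidable (c k l)] :
        0 ≤ ∑ k, ∑ l, if c k l then p μ ν k l else 0 :=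
      Finset.sum_nonneg fun k _ => Finset.sum_nonneg fun l _ => h _ _ _ _ _
    have h1 := this 1 1 (fun k l => k < l)
    have h2 := this 0 1 (fun k l => l < k)
    have h3 := this 0 0 (fun k l => k < l)
    have h4 := this 1 0 (fun k l => l ≤ k)
    linarith
  rw [Finset.sum_comm]
  have hsub : ∑ l ∈ s.toFinset, ∑ k, p 0 0 k l = ∑ l, ∑ k, p 0 0 k l := by
    refine Finset.sum_subset (Finset.subset_univ _) fun l _ hl => ?_
    exact Finset.sum_eq_zero fun k _ => h0 k l (by simpa using hl)
  rw [← hsub]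
  calc ∑ l ∈ s.toFinset, ∑ k, p 0 0 k l ≤ s.toFinset.card • ZG p :=
        Finset.sum_le_card_nsmul _ _ _ fun l _ => marginal_le_ZG p hp hns l
    _ ≤ n * ZG p := by
        rw [nsmul_eq_mul]
        rw [Set.ncard_eq_toFinset_card'] at hs
        gcongr

theorem ZG_sum {a r : ℕ} (p : Fin a → Fin 2 → Fin 2 → Fin r → Fin r → ℝ) :
    ZG (fun μ ν k l => ∑ α, p α μ ν k l) = ∑ α, ZG (p α) := by
  have (μ ν : Fin 2) (c : Fin r → Fin r → Prop) [∀ k l, Decidable (c k l)] :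
      (∑ k, ∑ l, if c k l then ∑ α, p α μ ν k l else 0) =
        ∑ α, ∑ k, ∑ l, if c k l then p α μ ν k l else 0 := by
    rw [eq_comm, Finset.sum_comm]
    refine Finset.sum_congr rfl fun k _ => ?_
    rw [Finset.sum_comm]
    refine Finset.sum_congr rfl fun l _ => ?_
    split_ifs <;> simp
  simp only [ZG, this, Finset.sum_add_distrib]

/-- The value of `ZG` on an `n`-chotomic quantum correlation is at least `1 / n`. -/
theorem IsNChotomicQC.one_le_mul_ZG {n r : ℕ} {P : Fin 2 → Fin 2 → Fin r → Fin r → ℝ}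
    (h : IsNChotomicQC n r P) : 1 ≤ n * ZG P := by
  obtain ⟨hc, a, dA, dB, -, -, η, DA, DB, hη, -, hA, hA1, -, hB, hB1, hBn, hP⟩ := h
  set T : Fin a → Fin 2 → Fin 2 → Fin r → Fin r → ℂ :=
    fun α μ ν k l => (η α * (DA μ α k ⊗ₖ DB ν α l)).trace with hT
  have hT0 (α μ ν k l) : 0 ≤ T α μ ν k l :=
    PosSemidef.trace_mul_nonneg (hη α) ((hA μ α k).kronecker (hB ν α l))
  have hPsum : P = fun μ ν k l => ∑ α, (T α μ ν k l).re := by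
    funext μ ν k l
    rw [← Complex.re_sum, ← hP, Complex.ofReal_re]
  have hns (α) : NoSignaling r fun μ ν k l => (T α μ ν k l).re := by
    constructor
    · intro μ k
      simp only [← Complex.re_sum, hT, sum_trace_mul_kronecker_right _ _ _ (hB1 _ α)]
    · intro ν l
      simp only [← Complex.re_sum, hT, sum_trace_mul_kronecker_left _ _ _ (hA1 _ α)]
  have hα (α) := sum_le_mul_ZG (n := n) (fun μ ν k l => (T α μ ν k l).re)
    (fun μ ν k l => (Complex.le_def.mp (hT0 α μ ν k l)).1) (hns α) {l | DB 0 α l ≠ 0} (hBn 0 α)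
    (fun k l hl => by
      have : DB 0 α l = 0 := by simpa using hl
      simp [hT, this])
  calc (1 : ℝ) = ∑ k, ∑ l, P 0 0 k l := (hc.2 0 0).symm
    _ = ∑ α, ∑ k, ∑ l, (T α 0 0 k l).re := by
        rw [hPsum, eq_comm, Finset.sum_comm]
        refine Finset.sum_congr rfl fun k _ => ?_
        rw [Finset.sum_comm]
    _ ≤ ∑ α, n * ZG (fun μ ν k l => (T α μ ν k l).re) := Finset.sum_le_sum fun α _ => hα α
    _ = n * ZG P := by
        rw [hPsum, ZG_sum (fun α μ ν k l => (T α μ ν k l).re), Finset.mul_sum]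

/-- The Born rule for a state and full measurements on both sides is a quantum correlation. -/
theorem isNChotomicQC_of_state {r dA dB : ℕ} (hdA : 1 ≤ dA) (hdB : 1 ≤ dB)
    (η : Matrix (Fin dA × Fin dB) (Fin dA × Fin dB) ℂ) (DA : Fin 2 → Fin r → Matrix (Fin dA) (Fin dA) ℂ)
    (DB : Fin 2 → Fin r → Matrix (Fin dB) (Fin dB) ℂ) (hη : η.PosSemidef) (hη1 : η.trace = 1)
    (hA : ∀ μ k, (DA μ k).PosSemidef) (hA1 : ∀ μ, ∑ k, DA μ k = 1)
    (hB : ∀ ν l, (DB ν l).PosSemidef) (hB1 : ∀ ν, ∑ l, DB ν l = 1) {n : ℕ} (hn : r ≤ n) :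
    ∃ P, IsNChotomicQC n r P ∧
      ∀ μ ν k l, (P μ ν k l : ℂ) = (η * (DA μ k ⊗ₖ DB ν l)).trace := by
  have hT0 (μ ν k l) : 0 ≤ (η * (DA μ k ⊗ₖ DB ν l)).trace :=
    PosSemidef.trace_mul_nonneg hη ((hA μ k).kronecker (hB ν l))
  have hcard (s : Set (Fin r)) : s.ncard ≤ n :=
    ((Set.ncard_le_card s).trans (by simp)).trans hn
  have hre (μ ν k l) : (((η * (DA μ k ⊗ₖ DB ν l)).trace.re : ℝ) : ℂ) =
      (η * (DA μ k ⊗ₖ DB ν l)).trace :=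
    Complex.ext (by simp) (by simpa using (Complex.le_def.mp (hT0 μ ν k l)).2)
  refine ⟨fun μ ν k l => (η * (DA μ k ⊗ₖ DB ν l)).trace.re, ⟨⟨?_, ?_⟩, ?_⟩, hre⟩
  · exact fun μ ν k l => (Complex.le_def.mp (hT0 μ ν k l)).1
  · intro μ ν
    simp only [← Complex.re_sum, sum_sum_trace_mul_kronecker η _ _ (hA1 μ) (hB1 ν), hη1,
      Complex.one_re]
  · exact ⟨1, dA, dB, hdA, hdB, fun _ => η, fun μ _ => DA μ, fun ν _ => DB ν, fun _ => hη,
      by simpa using hη1, fun μ _ => hA μ, fun μ _ => hA1 μ, fun _ _ => hcard _, fun ν _ => hB ν,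
      fun ν _ => hB1 ν, fun _ _ => hcard _, fun μ ν k l => by simpa using hre μ ν k l⟩

theorem exists_isNChotomicQC_one {n : ℕ} (hn : 1 ≤ n) : ∃ P, IsNChotomicQC n 1 P :=
  have h1 {ι : Type} [Fintype ι] [DecidableEq ι] : (1 : Matrix ι ι ℂ).PosSemidef :=
    Matrix.PosSemidef.one
  (isNChotomicQC_of_state (dA := 1) (dB := 1) le_rfl le_rfl 1 (fun _ _ => 1) (fun _ _ => 1) h1
    (by simp) (fun _ _ => h1) (by simp) (fun _ _ => h1) (by simp) hn).imp fun _ h => h.1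


theorem arctan_sub_arctan_le {x y : ℝ} (hx : 0 ≤ x) (hxy : x ≤ y) :
    Real.arctan y - Real.arctan x ≤ (y - x) / (1 + x * y) := by
  have h : y * -x < 1 := by nlinarith
  have h1 := Real.arctan_add h
  rw [Real.arctan_neg, ← sub_eq_add_neg, ← sub_eq_add_neg] at h1
  have h2 : (y - x) / (1 - y * -x) = (y - x) / (1 + x * y) := by ring_nf
  rw [h1, h2]
  have h3 : 0 ≤ (y - x) / (1 + x * y) := div_nonneg (by linarith) (by nlinarith)
  have := Real.le_tan (Real.arctan_nonneg.mpr h3) (Real.arctan_lt_pi_div_two _)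
  rwa [Real.tan_arctan] at this

theorem arctan_sqrt_sub_le {a b : ℝ} (ha : 0 < a) (hb : 0 < b) :
    Real.arctan (√(b + 1) / √a) - Real.arctan (√b / √a) ≤ √a / (2 * √b * (a + b)) := by
  have hs : 0 < √a := Real.sqrt_pos.mpr ha
  have ht : 0 < √b := Real.sqrt_pos.mpr hb
  have hu : √b ≤ √(b + 1) := Real.sqrt_le_sqrt (by linarith)
  have hs2 : √a ^ 2 = a := Real.sq_sqrt ha.le
  have ht2 : √b ^ 2 = b := Real.sq_sqrt hb.le
  have hu2 : √(b + 1) ^ 2 = b + 1 := Real.sq_sqrt (by linarith)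
  have hy : √b / √a ≤ √(b + 1) / √a := by gcongr
  refine (arctan_sub_arctan_le (by positivity) hy).trans ?_
  generalize √a = s at *
  generalize √b = t at *
  generalize √(b + 1) = u at *
  have : (u / s - t / s) / (1 + t / s * (u / s)) = s * (u - t) / (s ^ 2 + t * u) := by
    field_simp
  rw [this, div_le_div_iff₀ (by nlinarith) (by positivity), ← hs2, ← ht2]
  have h1 : 2 * t * (u - t) ≤ 1 := by nlinarith
  have h2 : s ^ 2 + t ^ 2 ≤ s ^ 2 + t * u := by nlinarith
  have h3 : 0 ≤ u - t := by linarith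
  calc s * (u - t) * (2 * t * (s ^ 2 + t ^ 2)) = s * (2 * t * (u - t)) * (s ^ 2 + t ^ 2) := by ring
    _ ≤ s * 1 * (s ^ 2 + t * u) := by gcongr
    _ = s * (s ^ 2 + t * u) := by ring

theorem pi_div_two_sub_inv_le_arctan {x : ℝ} (hx : 0 < x) : Real.pi / 2 - x⁻¹ ≤ Real.arctan x := by
  have h := Real.arctan_inv_of_pos hx
  have := Real.le_tan (Real.arctan_nonneg.mpr (inv_nonneg.mpr hx.le)) (Real.arctan_lt_pi_div_two _)
  rw [Real.tan_arctan] at this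
  linarith

theorem arctan_le_of_nonneg {x : ℝ} (hx : 0 ≤ x) : Real.arctan x ≤ x := by
  simpa using arctan_sub_arctan_le le_rfl hx

theorem sum_inv_sqrt_mul_add_ge {a : ℝ} (ha : 0 < a) {K : ℕ} (hK : 0 < K) :
    (Real.pi - 2 * √a / √K - 2 / √a) / √a ≤
      ∑ b ∈ Finset.range K, 1 / (√(b + 1) * (a + (b + 1))) := by
  have hs : 0 < √a := Real.sqrt_pos.mpr ha
  have hK' : 0 < √(K : ℝ) := Real.sqrt_pos.mpr (by exact_mod_cast hK)
  have htel := Finset.sum_range_sub (fun b : ℕ => Real.arctan (√((b : ℝ) + 1) / √a)) K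
  have hle : ∑ b ∈ Finset.range K, (Real.arctan (√(((b + 1 : ℕ) : ℝ) + 1) / √a) -
      Real.arctan (√((b : ℝ) + 1) / √a)) ≤
      ∑ b ∈ Finset.range K, √a / 2 * (1 / (√((b : ℝ) + 1) * (a + (b + 1)))) := by
    refine Finset.sum_le_sum fun b _ => ?_
    have := arctan_sqrt_sub_le ha (b := (b : ℝ) + 1) (by positivity)
    push_cast
    refine this.trans_eq ?_
    field_simp
  rw [htel, ← Finset.mul_sum] at hle
  have h1 : Real.pi / 2 - √a / √K ≤ Real.arctan (√((K : ℝ) + 1) / √a) := by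
    have := pi_div_two_sub_inv_le_arctan (x := √(K : ℝ) / √a) (by positivity)
    rw [inv_div] at this
    refine this.trans (Real.arctan_le_arctan_iff.mpr ?_)
    gcongr
    linarith
  have h2 : Real.arctan (√(((0 : ℕ) : ℝ) + 1) / √a) ≤ 1 / √a := by
    simpa using arctan_le_of_nonneg (x := 1 / √a) (by positivity)
  rw [div_le_iff₀ hs]
  have e : 2 * √a / √K = 2 * (√a / √K) := by ring
  have e' : 2 / √a = 2 * (1 / √a) := by ring
  rw [e, e']
  linarith

theorem sum_one_div_sqrt_le (K : ℕ) :
    ∑ a ∈ Finset.range K, 1 / √((a : ℝ) + 1) ≤ 2 * √K := by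
  induction K with
  | zero => simp
  | succ K ih =>
    rw [Finset.sum_range_succ]
    push_cast
    have ht : 0 < √((K : ℝ) + 1) := Real.sqrt_pos.mpr (by positivity)
    have hs2 : √(K : ℝ) ^ 2 = K := Real.sq_sqrt (by positivity)
    have ht2 : √((K : ℝ) + 1) ^ 2 = K + 1 := Real.sq_sqrt (by positivity)
    have : 1 / √((K : ℝ) + 1) ≤ 2 * √((K : ℝ) + 1) - 2 * √K := by
      rw [div_le_iff₀ ht]
      nlinarith [sq_nonneg (√((K : ℝ) + 1) - √K)]
    linarith

theorem sum_one_div_mul_sqrt_le (K : ℕ) :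
    ∑ a ∈ Finset.range (K + 1), 1 / (((a : ℝ) + 1) * √((a : ℝ) + 1)) ≤ 3 - 2 / √((K : ℝ) + 1) := by
  induction K with
  | zero => norm_num
  | succ K ih =>
    rw [Finset.sum_range_succ]
    push_cast
    have hs : 0 < √((K : ℝ) + 1) := Real.sqrt_pos.mpr (by positivity)
    have ht : 0 < √((K : ℝ) + 1 + 1) := Real.sqrt_pos.mpr (by positivity)
    have hs2 : √((K : ℝ) + 1) ^ 2 = K + 1 := Real.sq_sqrt (by positivity)
    have ht2 : √((K : ℝ) + 1 + 1) ^ 2 = K + 1 + 1 := Real.sq_sqrt (by positivity)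
    have : 1 / (((K : ℝ) + 1 + 1) * √((K : ℝ) + 1 + 1)) ≤
        2 / √((K : ℝ) + 1) - 2 / √((K : ℝ) + 1 + 1) := by
      have hst : √((K : ℝ) + 1) ≤ √((K : ℝ) + 1 + 1) := Real.sqrt_le_sqrt (by linarith)
      rw [← ht2, Real.sqrt_sq ht.le]
      generalize √((K : ℝ) + 1) = s at *
      generalize √((K : ℝ) + 1 + 1) = t at *
      rw [div_sub_div _ _ hs.ne' ht.ne', div_le_div_iff₀ (by positivity) (by positivity)]
      have h1 : (t - s) * (t + s) = 1 := by nlinarith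
      have h2 : s * (t + s) ≤ 2 * t ^ 2 := by nlinarith
      have h3 : 0 ≤ t - s := by linarith
      calc 1 * (s * t) = (t - s) * (s * (t + s)) * t := by linear_combination (-(s * t)) * h1
        _ ≤ (t - s) * (2 * t ^ 2) * t := by gcongr
        _ = (2 * t - s * 2) * (t ^ 2 * t) := by ring
    linarith

/-- Hilbert's double series inequality is asymptotically sharp for the weights `1 / √(a + 1)`. -/
theorem hilbert_double_sum_ge (K : ℕ) :
    Real.pi * ∑ a ∈ Finset.range K, 1 / ((a : ℝ) + 1) - 10 ≤
      ∑ a ∈ Finset.range K, ∑ b ∈ Finset.range K,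
        1 / √((a : ℝ) + 1) * (1 / √((b : ℝ) + 1)) / (a + b + 1) := by
  rcases Nat.eq_zero_or_pos K with rfl | hK
  · simp
  have hK' : 0 < √(K : ℝ) := Real.sqrt_pos.mpr (by exact_mod_cast hK)
  have h1 : ∀ a ∈ Finset.range K, Real.pi * (1 / ((a : ℝ) + 1)) - 2 / √K * (1 / √((a : ℝ) + 1)) -
      2 * (1 / (((a : ℝ) + 1) * √((a : ℝ) + 1))) ≤
      ∑ b ∈ Finset.range K, 1 / √((a : ℝ) + 1) * (1 / √((b : ℝ) + 1)) / (a + b + 1) := by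
    intro a _
    have ha : (0 : ℝ) < a + 1 := by positivity
    have hs : 0 < √((a : ℝ) + 1) := Real.sqrt_pos.mpr ha
    have hs2 : √((a : ℝ) + 1) ^ 2 = a + 1 := Real.sq_sqrt ha.le
    have h := sum_inv_sqrt_mul_add_ge ha hK
    calc _ = 1 / √((a : ℝ) + 1) *
          ((Real.pi - 2 * √((a : ℝ) + 1) / √K - 2 / √((a : ℝ) + 1)) / √((a : ℝ) + 1)) := by
          rw [← hs2, Real.sqrt_sq hs.le]
          generalize √((a : ℝ) + 1) = s at *
          field_simp
      _ ≤ 1 / √((a : ℝ) + 1) *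
          ∑ b ∈ Finset.range K, 1 / (√((b : ℝ) + 1) * ((a : ℝ) + 1 + (b + 1))) := by gcongr
      _ ≤ _ := by
          rw [Finset.mul_sum]
          refine Finset.sum_le_sum fun b _ => ?_
          rw [mul_div_assoc, div_div]
          have hab : (a : ℝ) + b + 1 ≤ a + 1 + (b + 1) := by linarith
          exact mul_le_mul_of_nonneg_left (one_div_le_one_div_of_le (by positivity)
            (mul_le_mul_of_nonneg_left hab (Real.sqrt_nonneg _))) (by positivity)
  refine le_trans ?_ (Finset.sum_le_sum h1)
  rw [Finset.sum_sub_distrib, Finset.sum_sub_distrib, ← Finset.mul_sum, ← Finset.mul_sum,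
    ← Finset.mul_sum]
  have h2 := sum_one_div_sqrt_le K
  have h3 : ∑ a ∈ Finset.range K, 1 / (((a : ℝ) + 1) * √((a : ℝ) + 1)) ≤ 3 := by
    obtain ⟨k, rfl⟩ : ∃ k, K = k + 1 := ⟨K - 1, by omega⟩
    have := sum_one_div_mul_sqrt_le k
    have : 0 ≤ 2 / √((k : ℝ) + 1) := by positivity
    linarith
  have h4 : 2 / √(K : ℝ) * ∑ a ∈ Finset.range K, 1 / √((a : ℝ) + 1) ≤ 4 := by
    calc _ ≤ 2 / √(K : ℝ) * (2 * √K) := by gcongr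
      _ = 4 := by field_simp; norm_num
  linarith

/-- The rank-one projector onto the Fourier vector of (possibly fractional) frequency `s`. -/
def fourierProjector (d : ℕ) (s : ℝ) : Matrix (Fin d) (Fin d) ℂ :=
  Matrix.vecMulVec (fun j => Complex.exp (2 * Real.pi * (j : ℕ) * s / d * Complex.I) / (√d : ℝ))
    (star fun j => Complex.exp (2 * Real.pi * (j : ℕ) * s / d * Complex.I) / (√d : ℝ))

theorem fourierProjector_posSemidef (d : ℕ) (s : ℝ) : (fourierProjector d s).PosSemidef :=
  Matrix.posSemidef_vecMulVec_self_star _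

theorem fourierProjector_apply (d : ℕ) (s : ℝ) (i j : Fin d) :
    fourierProjector d s i j =
      Complex.exp (2 * Real.pi * ((i : ℕ) - (j : ℕ)) * s / d * Complex.I) / d := by
  have hd : (((√(d : ℝ) : ℝ) : ℂ)) * ((√(d : ℝ) : ℝ) : ℂ) = d := by
    rw [← Complex.ofReal_mul, Real.mul_self_sqrt (Nat.cast_nonneg d), Complex.ofReal_natCast]
  rw [fourierProjector, Matrix.vecMulVec_apply, Pi.star_apply, star_div₀, Complex.star_def,
    ← Complex.exp_conj, Complex.conj_ofReal, div_mul_div_comm, ← Complex.exp_add,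
    hd]
  congr 2
  simp only [map_mul, map_div₀, Complex.conj_I, Complex.conj_ofReal, map_natCast, map_ofNat]
  ring

theorem exp_fourier_pow {d : ℕ} (hd : d ≠ 0) (m : ℤ) :
    Complex.exp (2 * Real.pi * m / d * Complex.I) ^ d = 1 := by
  rw [← Complex.exp_nat_mul, Complex.exp_eq_one_iff]
  have : (d : ℂ) ≠ 0 := by exact_mod_cast hd
  exact ⟨m, by field_simp⟩

theorem exp_fourier_ne_one {d : ℕ} {i j : Fin d} (hij : i ≠ j) :
    Complex.exp (2 * Real.pi * ((i : ℤ) - (j : ℤ) : ℤ) / d * Complex.I) ≠ 1 := by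
  rw [Ne, Complex.exp_eq_one_iff]
  rintro ⟨n, hn⟩
  have hd : (d : ℂ) ≠ 0 := by
    have := i.pos
    exact_mod_cast this.ne'
  have hpi : (Real.pi : ℂ) ≠ 0 := by exact_mod_cast Real.pi_ne_zero
  have h : (((i : ℤ) - (j : ℤ) : ℤ) : ℂ) = n * d := by
    have h2 : 2 * (Real.pi : ℂ) * Complex.I ≠ 0 := Complex.two_pi_I_ne_zero
    field_simp at hn
    linear_combination hn
  have h' : (i : ℤ) - (j : ℤ) = n * d := by exact_mod_cast h
  have hi := i.isLt
  have hj := j.isLt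
  have hne : (i : ℕ) ≠ j := fun h => hij (Fin.ext h)
  rcases lt_trichotomy n 0 with h0 | rfl | h0
  · nlinarith
  · omega
  · nlinarith

theorem sum_fourierProjector (d : ℕ) (t : ℝ) :
    ∑ k : Fin d, fourierProjector d ((k : ℕ) + t) = 1 := by
  ext i j
  have hd0 : d ≠ 0 := i.pos.ne'
  have hd : (d : ℂ) ≠ 0 := by exact_mod_cast hd0
  simp only [Matrix.sum_apply, fourierProjector_apply, ← Finset.sum_div]
  have hterm (k : Fin d) :
      Complex.exp (2 * Real.pi * ((i : ℕ) - (j : ℕ)) * ((k : ℕ) + t : ℝ) / d * Complex.I) =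
        Complex.exp (2 * Real.pi * ((i : ℕ) - (j : ℕ)) * t / d * Complex.I) *
        Complex.exp (2 * Real.pi * ((i : ℤ) - (j : ℤ) : ℤ) / d * Complex.I) ^ (k : ℕ) := by
    rw [← Complex.exp_nat_mul, ← Complex.exp_add]
    congr 1
    push_cast
    ring
  simp only [hterm, ← Finset.mul_sum]
  rw [Fin.sum_univ_eq_sum_range
    (fun k => Complex.exp (2 * Real.pi * ((i : ℤ) - (j : ℤ) : ℤ) / d * Complex.I) ^ k)]
  by_cases hij : i = j
  · subst hij
    simp [hd]
  · rw [geom_sum_eq (exp_fourier_ne_one hij), exp_fourier_pow hd0, Matrix.one_apply_ne hij]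
    simp

/-- The vector with Schmidt coefficients `c` in the standard basis. -/
def schmidtVector {d : ℕ} (c : Fin d → ℝ) : Fin d × Fin d → ℂ :=
  fun p => if p.1 = p.2 then (c p.1 : ℂ) else 0

theorem trace_schmidt_mul_kronecker {d : ℕ} (c : Fin d → ℝ) (A B : Matrix (Fin d) (Fin d) ℂ) :
    (Matrix.vecMulVec (schmidtVector c) (star (schmidtVector c)) * (A ⊗ₖ B)).trace =
      ∑ i, ∑ j, (c i * c j : ℂ) * (A i j * B i j) := by
  rw [Matrix.vecMulVec_mul, Matrix.trace_vecMulVec, dotProduct_comm, ← Matrix.dotProduct_mulVec]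
  simp only [dotProduct, Matrix.mulVec, Fintype.sum_prod_type, Matrix.kroneckerMap_apply,
    schmidtVector, Pi.star_apply, apply_ite star, star_zero, ite_mul, zero_mul, mul_ite, mul_zero,
    Finset.sum_ite_eq, Finset.mem_univ, if_true, Complex.star_def, Complex.conj_ofReal]
  refine Finset.sum_congr rfl fun i _ => ?_
  rw [Finset.mul_sum]
  exact Finset.sum_congr rfl fun j _ => by ring

theorem trace_schmidt {d : ℕ} (c : Fin d → ℝ) (hc : ∑ i, c i ^ 2 = 1) :
    (Matrix.vecMulVec (schmidtVector c) (star (schmidtVector c))).trace = 1 := by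
  have := trace_schmidt_mul_kronecker c 1 1
  rw [Matrix.one_kronecker_one, mul_one] at this
  rw [this]
  simp only [Matrix.one_apply, mul_ite, mul_one, mul_zero]
  have h2 : (((∑ i, c i ^ 2 : ℝ)) : ℂ) = 1 := by rw [hc]; simp
  rw [← h2]
  push_cast
  exact Finset.sum_congr rfl fun i _ => by simp [sq]

theorem sum_lt_pow_mul_inv_pow {d : ℕ} (x : ℂ) :
    (∑ k : Fin d, ∑ l : Fin d, if k < l then x ^ (k : ℕ) * x⁻¹ ^ (l : ℕ) else 0) =
      ∑ l ∈ Finset.range d, x⁻¹ ^ l * ∑ k ∈ Finset.range l, x ^ k := by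
  rw [Finset.sum_comm, ← Fin.sum_univ_eq_sum_range
    (fun l => x⁻¹ ^ l * ∑ k ∈ Finset.range l, x ^ k)]
  refine Finset.sum_congr rfl fun l _ => ?_
  have h : (Finset.range d).filter (· < (l : ℕ)) = Finset.range l := by
    ext k
    have := l.isLt
    simp only [Finset.mem_filter, Finset.mem_range]
    omega
  rw [Finset.mul_sum, ← h, Finset.sum_filter,
    ← Fin.sum_univ_eq_sum_range (fun k => if k < (l : ℕ) then x⁻¹ ^ (l : ℕ) * x ^ k else 0)]
  refine Finset.sum_congr rfl fun k _ => ?_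
  simp only [Fin.lt_def, mul_comm]

theorem sum_lt_pow_mul_inv_pow_of_ne_one {d : ℕ} {x : ℂ} (hx0 : x ≠ 0) (hx : x ≠ 1)
    (hxd : x ^ d = 1) :
    (∑ k : Fin d, ∑ l : Fin d, if k < l then x ^ (k : ℕ) * x⁻¹ ^ (l : ℕ) else 0) =
      d / (x - 1) := by
  have hx' : x - 1 ≠ 0 := sub_ne_zero.mpr hx
  have hterm (l : ℕ) : x⁻¹ ^ l * ∑ k ∈ Finset.range l, x ^ k = (1 - x⁻¹ ^ l) / (x - 1) := by
    rw [geom_sum_eq hx, mul_div_assoc', mul_sub, ← mul_pow, inv_mul_cancel₀ hx0, one_pow, mul_one]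
  have hinv : x⁻¹ ≠ 1 := by simpa using hx
  simp only [sum_lt_pow_mul_inv_pow, hterm, ← Finset.sum_div, Finset.sum_sub_distrib]
  rw [geom_sum_eq hinv, inv_pow, hxd]
  simp

/-- The matrix elements of the Bell operator of `ZG` for the Fourier measurements, up to scaling. -/
def bellKernel (d : ℕ) (y : ℂ) : ℂ :=
  2 * (∑ k : Fin d, ∑ l : Fin d,
      if k < l then y * ((y ^ 4) ^ (k : ℕ) * (y ^ 4)⁻¹ ^ (l : ℕ)) else 0)
  + (∑ k : Fin d, ∑ l : Fin d,
      if l < k then y⁻¹ * ((y ^ 4) ^ (k : ℕ) * (y ^ 4)⁻¹ ^ (l : ℕ)) else 0)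
  + (∑ k : Fin d, ∑ l : Fin d,
      if l ≤ k then y ^ 3 * ((y ^ 4) ^ (k : ℕ) * (y ^ 4)⁻¹ ^ (l : ℕ)) else 0)

theorem bellKernel_eq (d : ℕ) (y : ℂ) (T T' S S' : ℂ)
    (hT : (∑ k : Fin d, ∑ l : Fin d,
      if k < l then (y ^ 4) ^ (k : ℕ) * (y ^ 4)⁻¹ ^ (l : ℕ) else 0) = T)
    (hT' : (∑ k : Fin d, ∑ l : Fin d,
      if k < l then (y ^ 4)⁻¹ ^ (k : ℕ) * (y ^ 4)⁻¹⁻¹ ^ (l : ℕ) else 0) = T')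
    (hS : ∑ k ∈ Finset.range d, (y ^ 4) ^ k = S) (hS' : ∑ k ∈ Finset.range d, (y ^ 4)⁻¹ ^ k = S') :
    bellKernel d y = 2 * (y * T) + y⁻¹ * T' + y ^ 3 * (S * S' - T) := by
  have hlt : (∑ k : Fin d, ∑ l : Fin d,
      if l < k then (y ^ 4) ^ (k : ℕ) * (y ^ 4)⁻¹ ^ (l : ℕ) else 0) = T' := by
    rw [← hT', Finset.sum_comm]
    simp only [inv_inv, mul_comm]
  have hle : (∑ k : Fin d, ∑ l : Fin d,
      if l ≤ k then (y ^ 4) ^ (k : ℕ) * (y ^ 4)⁻¹ ^ (l : ℕ) else 0) = S * S' - T := by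
    rw [← hS, ← hS', ← Fin.sum_univ_eq_sum_range (fun k => (y ^ 4) ^ k),
      ← Fin.sum_univ_eq_sum_range (fun k => (y ^ 4)⁻¹ ^ k), Finset.sum_mul_sum, ← hT,
      ← Finset.sum_sub_distrib]
    refine Finset.sum_congr rfl fun k _ => ?_
    rw [← Finset.sum_sub_distrib]
    refine Finset.sum_congr rfl fun l _ => ?_
    rcases lt_or_ge k l with h | h
    · simp [h, not_le.mpr h]
    · simp [h, not_lt.mpr h]
  have hfac (z : ℂ) (R : Fin d → Fin d → Prop) [∀ k l, Decidable (R k l)] (f : Fin d → Fin d → ℂ) :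
      (∑ k, ∑ l, if R k l then z * f k l else 0) = z * ∑ k, ∑ l, if R k l then f k l else 0 := by
    simp only [Finset.mul_sum, mul_ite, mul_zero]
  rw [bellKernel, hfac, hfac, hfac, hT, hlt, hle]

theorem bellKernel_one (d : ℕ) : bellKernel d 1 = 2 * d ^ 2 - d := by
  have h : ∑ l ∈ Finset.range d, (l : ℂ) = d * (d - 1) / 2 := by
    induction d with
    | zero => simp
    | succ d ih => rw [Finset.sum_range_succ, ih]; push_cast; ring
  have hT := sum_lt_pow_mul_inv_pow (d := d) (1 : ℂ)
  simp only [inv_one, one_pow, Finset.sum_const, Finset.card_range, nsmul_eq_mul, mul_one,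
    one_mul, h] at hT
  rw [bellKernel_eq d 1 (d * (d - 1) / 2) (d * (d - 1) / 2) d d (by simpa using hT)
    (by simpa using hT) (by simp) (by simp)]
  simp
  ring

theorem bellKernel_of_ne_one {d : ℕ} {y : ℂ} (hy0 : y ≠ 0) (hy : y ^ 4 ≠ 1)
    (hyd : (y ^ 4) ^ d = 1) : bellKernel d y = -(2 * d / (y + y⁻¹)) := by
  have hx0 : y ^ 4 ≠ 0 := pow_ne_zero _ hy0
  have hS : ∑ k ∈ Finset.range d, (y ^ 4) ^ k = 0 := by rw [geom_sum_eq hy, hyd]; simp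
  have hinv : (y ^ 4)⁻¹ ≠ 1 := by rwa [Ne, inv_eq_one]
  have hinvd : ((y ^ 4)⁻¹) ^ d = 1 := by rw [inv_pow, hyd, inv_one]
  rw [bellKernel_eq d y _ _ _ _ (sum_lt_pow_mul_inv_pow_of_ne_one hx0 hy hyd)
    (sum_lt_pow_mul_inv_pow_of_ne_one (inv_ne_zero hx0) hinv hinvd) hS rfl]
  have h4 : y ^ 4 - 1 ≠ 0 := sub_ne_zero.mpr hy
  have h2 : y ^ 2 + 1 ≠ 0 := fun h => h4 (by linear_combination (y ^ 2 - 1) * h)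
  have h2' : y ^ 2 - 1 ≠ 0 := fun h => h4 (by linear_combination (y ^ 2 + 1) * h)
  have e1 : (y ^ 4)⁻¹ - 1 = -((y ^ 2 - 1) * (y ^ 2 + 1)) / y ^ 4 := by field_simp; ring
  have e2 : y + y⁻¹ = (y ^ 2 + 1) / y := by field_simp
  have e3 : y ^ 4 - 1 = (y ^ 2 - 1) * (y ^ 2 + 1) := by ring
  rw [e1, e2, e3]
  field_simp
  ring

theorem bellKernel_exp {d : ℕ} (i j : Fin d) :
    bellKernel d (Complex.exp (Real.pi * ((i : ℕ) - (j : ℕ)) / (2 * d) * Complex.I)) =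
      (if i = j then 2 * (d : ℂ) ^ 2 else 0) -
        d / (Real.cos (Real.pi * ((i : ℕ) - (j : ℕ)) / (2 * d)) : ℝ) := by
  have hd0 : d ≠ 0 := i.pos.ne'
  by_cases hij : i = j
  · subst hij
    simp [bellKernel_one]
  · have h4 : Complex.exp (Real.pi * ((i : ℕ) - (j : ℕ)) / (2 * d) * Complex.I) ^ 4 =
        Complex.exp (2 * Real.pi * ((i : ℤ) - (j : ℤ) : ℤ) / d * Complex.I) := by
      rw [← Complex.exp_nat_mul]
      congr 1
      push_cast
      ring
    rw [bellKernel_of_ne_one (Complex.exp_ne_zero _) (h4 ▸ exp_fourier_ne_one hij)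
      (h4 ▸ exp_fourier_pow hd0 _), if_neg hij, zero_sub, ← Complex.exp_neg, Complex.ofReal_cos,
      Complex.cos, ← neg_mul, div_div_eq_mul_div]
    push_cast
    ring

/-- The value of `ZG` attained by Fourier measurements with fractional phases on the state with
Schmidt coefficients `c`. -/
theorem exists_isNChotomicQC_ZG_eq {d : ℕ} (hd : 1 ≤ d) (c : Fin d → ℝ) (hc : ∑ i, c i ^ 2 = 1) :
    ∃ P, IsNChotomicQC d d P ∧ ZG P =
      2 - ∑ i, ∑ j, c i * c j / (d * Real.cos (Real.pi * ((i : ℕ) - (j : ℕ)) / (2 * d))) := by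
  have hd' : (d : ℂ) ≠ 0 := by exact_mod_cast (by omega : d ≠ 0)
  obtain ⟨P, hP, hborn⟩ := isNChotomicQC_of_state hd hd
    (Matrix.vecMulVec (schmidtVector c) (star (schmidtVector c)))
    (fun μ k => fourierProjector d ((k : ℕ) + (![0, 1 / 2] : Fin 2 → ℝ) μ))
    (fun ν l => (fourierProjector d ((l : ℕ) + (![-(1 / 4), 1 / 4] : Fin 2 → ℝ) ν))ᵀ)
    (Matrix.posSemidef_vecMulVec_self_star _) (trace_schmidt c hc)
    (fun _ _ => fourierProjector_posSemidef _ _) (fun _ => sum_fourierProjector _ _)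
    (fun _ _ => (fourierProjector_posSemidef _ _).transpose)
    (fun _ => by rw [← Matrix.transpose_sum, sum_fourierProjector, Matrix.transpose_one])
    le_rfl
  refine ⟨P, hP, ?_⟩
  set y : Fin d → Fin d → ℂ := fun i j =>
    Complex.exp (Real.pi * ((i : ℕ) - (j : ℕ)) / (2 * d) * Complex.I) with hy
  have hentry (i j : Fin d) (k l : ℕ) (s t : ℝ) :
      fourierProjector d (k + s) i j * (fourierProjector d (l + t))ᵀ i j =
        Complex.exp (4 * (s - t) * (Real.pi * ((i : ℕ) - (j : ℕ)) / (2 * d) * Complex.I)) *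
          ((y i j ^ 4) ^ k * (y i j ^ 4)⁻¹ ^ l) / d ^ 2 := by
    rw [Matrix.transpose_apply, fourierProjector_apply, fourierProjector_apply, div_mul_div_comm,
      ← Complex.exp_add, hy]
    simp only [← Complex.exp_nat_mul, ← Complex.exp_neg, ← Complex.exp_add, ← sq]
    congr 2
    push_cast
    ring
  have hPsum (μ ν : Fin 2) (w : ℂ)
      (hw : 4 * (((![0, 1 / 2] : Fin 2 → ℝ) μ : ℂ) - ((![-(1 / 4), 1 / 4] : Fin 2 → ℝ) ν : ℂ)) = w)
      (g : Fin d → Fin d → ℂ)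
      (hg : ∀ i j : Fin d, Complex.exp (w * (Real.pi * ((i : ℕ) - (j : ℕ)) / (2 * d) * Complex.I)) = g i j)
      (R : Fin d → Fin d → Prop) [∀ k l, Decidable (R k l)] :
      ((∑ k, ∑ l, if R k l then P μ ν k l else 0 : ℝ) : ℂ) =
        ∑ i, ∑ j, (c i * c j : ℂ) * ((∑ k : Fin d, ∑ l : Fin d,
          if R k l then g i j * ((y i j ^ 4) ^ (k : ℕ) * (y i j ^ 4)⁻¹ ^ (l : ℕ)) else 0) / d ^ 2) := by
    push_cast
    simp only [apply_ite Complex.ofReal, Complex.ofReal_zero, hborn, trace_schmidt_mul_kronecker,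
      hentry, hw, hg]
    simp only [Finset.sum_div, Finset.mul_sum]
    rw [eq_comm]
    calc _ = ∑ i, ∑ k, ∑ j, ∑ l, _ := Finset.sum_congr rfl fun i _ => Finset.sum_comm
      _ = ∑ k, ∑ i, ∑ j, ∑ l, _ := Finset.sum_comm
      _ = ∑ k, ∑ i, ∑ l, ∑ j, _ := Finset.sum_congr rfl fun k _ =>
          Finset.sum_congr rfl fun i _ => Finset.sum_comm
      _ = ∑ k, ∑ l, ∑ i, ∑ j, _ := Finset.sum_congr rfl fun k _ => Finset.sum_comm
      _ = _ := by
        refine Finset.sum_congr rfl fun k _ => Finset.sum_congr rfl fun l _ => ?_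
        split_ifs <;> simp
  have h11 := hPsum 1 1 1 (by simp; norm_num) y (fun i j => by rw [hy, one_mul])
    (fun k l => k < l)
  have h01 := hPsum 0 1 (-1) (by simp) (fun i j => (y i j)⁻¹)
    (fun i j => by rw [hy, ← Complex.exp_neg, neg_one_mul]) (fun k l => l < k)
  have h00 := hPsum 0 0 1 (by simp) y (fun i j => by rw [hy, one_mul]) (fun k l => k < l)
  have h10 := hPsum 1 0 3 (by simp; norm_num) (fun i j => y i j ^ 3)
    (fun i j => by rw [hy, ← Complex.exp_nat_mul, Nat.cast_ofNat]) (fun k l => l ≤ k)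
  have hZ : (ZG P : ℂ) = ∑ i, ∑ j, (c i * c j : ℂ) * (bellKernel d (y i j) / d ^ 2) := by
    unfold ZG
    rw [Complex.ofReal_add, Complex.ofReal_add, Complex.ofReal_add, h11, h01, h00, h10]
    simp only [← Finset.sum_add_distrib]
    refine Finset.sum_congr rfl fun i _ => Finset.sum_congr rfl fun j _ => ?_
    unfold bellKernel
    ring
  have hc' : ((∑ i, c i ^ 2 : ℝ) : ℂ) = 1 := by rw [hc]; simp
  apply Complex.ofReal_injective
  rw [hZ]
  simp only [hy, bellKernel_exp]
  have hsplit (i j : Fin d) : (c i * c j : ℂ) * (((if i = j then 2 * (d : ℂ) ^ 2 else 0) -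
        d / (Real.cos (Real.pi * ((i : ℕ) - (j : ℕ)) / (2 * d)) : ℝ)) / d ^ 2) =
      (if i = j then 2 * (c i : ℂ) ^ 2 else 0) - ((c i * c j /
        (d * Real.cos (Real.pi * ((i : ℕ) - (j : ℕ)) / (2 * d))) : ℝ) : ℂ) := by
    generalize Real.cos (Real.pi * ((i : ℕ) - (j : ℕ)) / (2 * d)) = C
    have e : (d : ℂ) / (C : ℂ) / d ^ 2 = 1 / (d * C) := by
      rw [div_div, sq, mul_comm (C : ℂ), mul_assoc, ← div_div, div_self hd']
    rw [sub_div, e]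
    push_cast
    split_ifs with h
    · subst h
      rw [mul_div_cancel_right₀ _ (pow_ne_zero 2 hd')]
      ring
    · ring
  simp only [hsplit, Finset.sum_sub_distrib, Finset.sum_ite_eq, Finset.mem_univ, if_true,
    ← Finset.mul_sum]
  push_cast at hc' ⊢
  rw [hc']
  simp

theorem mul_cos_pos {d : ℕ} (i j : Fin d) :
    0 < d * Real.cos (Real.pi * ((i : ℕ) - (j : ℕ)) / (2 * d)) := by
  have hd : (0 : ℝ) < d := by exact_mod_cast i.pos
  have hi : ((i : ℕ) : ℝ) < d := by exact_mod_cast i.isLt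
  have hj : ((j : ℕ) : ℝ) < d := by exact_mod_cast j.isLt
  have hi0 : (0 : ℝ) ≤ (i : ℕ) := Nat.cast_nonneg _
  have hj0 : (0 : ℝ) ≤ (j : ℕ) := Nat.cast_nonneg _
  have hpi := Real.pi_pos
  refine mul_pos hd (Real.cos_pos_of_mem_Ioo ⟨?_, ?_⟩)
  · rw [lt_div_iff₀ (by positivity)]
    nlinarith
  · rw [div_lt_iff₀ (by positivity)]
    nlinarith

theorem mul_cos_le {d : ℕ} (i j : Fin d) :
    d * Real.cos (Real.pi * ((i : ℕ) - (j : ℕ)) / (2 * d)) ≤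
      Real.pi / 2 * (d - |((i : ℕ) : ℝ) - (j : ℕ)|) := by
  have hd : (0 : ℝ) < d := by exact_mod_cast i.pos
  have hi : ((i : ℕ) : ℝ) < d := by exact_mod_cast i.isLt
  have hj : ((j : ℕ) : ℝ) < d := by exact_mod_cast j.isLt
  have hi0 : (0 : ℝ) ≤ (i : ℕ) := Nat.cast_nonneg _
  have hj0 : (0 : ℝ) ≤ (j : ℕ) := Nat.cast_nonneg _
  have habs : |((i : ℕ) : ℝ) - (j : ℕ)| ≤ d := abs_le.mpr ⟨by linarith, by linarith⟩
  have hx : |Real.pi * (((i : ℕ) : ℝ) - (j : ℕ)) / (2 * d)| =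
      Real.pi * |((i : ℕ) : ℝ) - (j : ℕ)| / (2 * d) := by
    rw [abs_div, abs_mul, abs_of_pos Real.pi_pos, abs_of_pos (by positivity : (0 : ℝ) < 2 * d)]
  have hy : Real.pi / 2 - Real.pi * |((i : ℕ) : ℝ) - (j : ℕ)| / (2 * d) =
      Real.pi / 2 * (d - |((i : ℕ) : ℝ) - (j : ℕ)|) / d := by field_simp
  rw [← Real.cos_abs, hx, ← Real.sin_pi_div_two_sub, hy]
  have h0 : 0 ≤ Real.pi / 2 * (d - |((i : ℕ) : ℝ) - (j : ℕ)|) / d := by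
    have := Real.pi_pos
    have : 0 ≤ (d : ℝ) - |((i : ℕ) : ℝ) - (j : ℕ)| := by linarith
    positivity
  calc _ ≤ (d : ℝ) * (Real.pi / 2 * (d - |((i : ℕ) : ℝ) - (j : ℕ)|) / d) := by
        gcongr
        exact Real.sin_le h0
    _ = _ := by field_simp

/-- Weights concentrated at both ends of `{0, …, 2K - 1}`. -/
def endWeight (K : ℕ) : Fin (K + K) → ℝ :=
  Fin.append (fun a => 1 / √((a : ℕ) + 1)) fun a => 1 / √((a.rev : ℕ) + 1)

theorem sum_endWeight_sq (K : ℕ) :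
    ∑ i, endWeight K i ^ 2 = 2 * ∑ a ∈ Finset.range K, 1 / ((a : ℝ) + 1) := by
  have h (a : ℕ) : (1 / √((a : ℝ) + 1)) ^ 2 = 1 / ((a : ℝ) + 1) := by
    rw [div_pow, Real.sq_sqrt (by positivity), one_pow]
  simp only [endWeight, Fin.sum_univ_add, Fin.append_left, Fin.append_right, h]
  have hrev : ∑ a : Fin K, 1 / (((a.rev : ℕ) : ℝ) + 1) = ∑ a : Fin K, 1 / (((a : ℕ) : ℝ) + 1) :=
    Equiv.sum_comp Fin.revPerm fun a : Fin K => 1 / (((a : ℕ) : ℝ) + 1)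
  rw [hrev, Fin.sum_univ_eq_sum_range (fun a => 1 / ((a : ℝ) + 1))]
  ring

theorem endWeight_nonneg (K : ℕ) (i : Fin (K + K)) : 0 ≤ endWeight K i := by
  refine Fin.addCases (fun a => ?_) (fun a => ?_) i
  · rw [endWeight, Fin.append_left]
    positivity
  · rw [endWeight, Fin.append_right]
    positivity

theorem endWeight_form_ge (K : ℕ) :
    4 / Real.pi * (Real.pi * ∑ a ∈ Finset.range K, 1 / ((a : ℝ) + 1) - 10) ≤
      ∑ i, ∑ j, endWeight K i * endWeight K j /
        ((K + K : ℕ) * Real.cos (Real.pi * ((i : ℕ) - (j : ℕ)) / (2 * (K + K : ℕ)))) := by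
  have hpi := Real.pi_pos
  set F : Fin (K + K) → Fin (K + K) → ℝ := fun i j => endWeight K i * endWeight K j /
    ((K + K : ℕ) * Real.cos (Real.pi * ((i : ℕ) - (j : ℕ)) / (2 * (K + K : ℕ)))) with hF
  have hF0 (i j) : 0 ≤ F i j :=
    div_nonneg (mul_nonneg (endWeight_nonneg K i) (endWeight_nonneg K j)) (mul_cos_pos i j).le
  have hsymm (i j) : F i j = F j i := by
    simp only [hF]
    rw [← Real.cos_neg, mul_comm (endWeight K i)]
    congr 3
    ring
  have hcross (a b : Fin K) : 2 / Real.pi * (1 / √(((a : ℕ) : ℝ) + 1) *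
      (1 / √(((b : ℕ) : ℝ) + 1)) / ((a : ℕ) + (b : ℕ) + 1)) ≤
      F (Fin.castAdd K a) (Fin.natAdd K b.rev) := by
    have h1 := mul_cos_le (Fin.castAdd K a) (Fin.natAdd K b.rev)
    have h2 := mul_cos_pos (Fin.castAdd K a) (Fin.natAdd K b.rev)
    have ha := a.isLt
    have hb := b.isLt
    have hrev : ((b.rev : ℕ) : ℝ) = K - 1 - (b : ℕ) := by
      rw [Fin.val_rev, Nat.cast_sub (by omega)]
      push_cast
      ring
    have haR : ((a : ℕ) : ℝ) + 1 ≤ K := by exact_mod_cast ha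
    have hbR : ((b : ℕ) : ℝ) + 1 ≤ K := by exact_mod_cast hb
    have habs : ((K + K : ℕ) : ℝ) - |(((Fin.castAdd K a : Fin (K + K)) : ℕ) : ℝ) -
        ((Fin.natAdd K b.rev : Fin (K + K)) : ℕ)| = (a : ℕ) + (b : ℕ) + 1 := by
      rw [Fin.val_castAdd, Fin.val_natAdd, abs_of_nonpos]
      · push_cast
        rw [hrev]
        ring
      · push_cast
        rw [hrev]
        linarith
    rw [habs] at h1
    simp only [hF]
    calc _ = 1 / √(((a : ℕ) : ℝ) + 1) * (1 / √(((b : ℕ) : ℝ) + 1)) /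
          (Real.pi / 2 * ((a : ℕ) + (b : ℕ) + 1)) := by field_simp
      _ ≤ 1 / √(((a : ℕ) : ℝ) + 1) * (1 / √(((b : ℕ) : ℝ) + 1)) / _ :=
          div_le_div_of_nonneg_left (by positivity) h2 h1
      _ = _ := by simp only [endWeight, Fin.append_left, Fin.append_right, Fin.rev_rev]
  have hhalf : 2 / Real.pi * (Real.pi * ∑ a ∈ Finset.range K, 1 / ((a : ℝ) + 1) - 10) ≤
      ∑ a : Fin K, ∑ b : Fin K, F (Fin.castAdd K a) (Fin.natAdd K b) := by
    calc _ ≤ 2 / Real.pi * ∑ a ∈ Finset.range K, ∑ b ∈ Finset.range K,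
          1 / √((a : ℝ) + 1) * (1 / √((b : ℝ) + 1)) / (a + b + 1) := by
          gcongr
          exact hilbert_double_sum_ge K
      _ = ∑ a : Fin K, ∑ b : Fin K, 2 / Real.pi * (1 / √(((a : ℕ) : ℝ) + 1) *
          (1 / √(((b : ℕ) : ℝ) + 1)) / ((a : ℕ) + (b : ℕ) + 1)) := by
          simp only [Finset.mul_sum, Finset.sum_range]
      _ ≤ ∑ a : Fin K, ∑ b : Fin K, F (Fin.castAdd K a) (Fin.natAdd K b.rev) :=
          Finset.sum_le_sum fun a _ => Finset.sum_le_sum fun b _ => hcross a b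
      _ = _ := Finset.sum_congr rfl fun a _ =>
          Equiv.sum_comp Fin.revPerm fun b => F (Fin.castAdd K a) (Fin.natAdd K b)
  have hhalf' : ∑ a : Fin K, ∑ b : Fin K, F (Fin.natAdd K a) (Fin.castAdd K b) =
      ∑ a : Fin K, ∑ b : Fin K, F (Fin.castAdd K a) (Fin.natAdd K b) := by
    rw [Finset.sum_comm]
    simp only [hsymm (Fin.natAdd K _)]
  have hdiag : 0 ≤ ∑ a : Fin K, ∑ b : Fin K, F (Fin.castAdd K a) (Fin.castAdd K b) :=
    Finset.sum_nonneg fun _ _ => Finset.sum_nonneg fun _ _ => hF0 _ _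
  have hdiag' : 0 ≤ ∑ a : Fin K, ∑ b : Fin K, F (Fin.natAdd K a) (Fin.natAdd K b) :=
    Finset.sum_nonneg fun _ _ => Finset.sum_nonneg fun _ _ => hF0 _ _
  simp only [Fin.sum_univ_add, Finset.sum_add_distrib]
  rw [hhalf']
  have e : 4 / Real.pi * (Real.pi * ∑ a ∈ Finset.range K, 1 / ((a : ℝ) + 1) - 10) =
      2 * (2 / Real.pi * (Real.pi * ∑ a ∈ Finset.range K, 1 / ((a : ℝ) + 1) - 10)) := by ring
  rw [e]
  linarith

/-- Quantum correlations bring `ZG` arbitrarily close to zero. -/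
theorem exists_isNChotomicQC_ZG_lt {ε : ℝ} (hε : 0 < ε) :
    ∃ d, 1 ≤ d ∧ ∃ P, IsNChotomicQC d d P ∧ ZG P < ε := by
  have hpi := Real.pi_pos
  obtain ⟨K, hK⟩ := (Real.tendsto_sum_range_one_div_nat_succ_atTop.eventually_gt_atTop
    (20 / (Real.pi * ε))).exists
  set H := ∑ a ∈ Finset.range K, 1 / ((a : ℝ) + 1) with hH
  have hHpos : 0 < H := lt_trans (by positivity) hK
  have hK1 : 1 ≤ K := by
    by_contra! h
    obtain rfl : K = 0 := by omega
    simp [hH] at hHpos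
  have hs : √(2 * H) ^ 2 = 2 * H := Real.sq_sqrt (by positivity)
  obtain ⟨P, hP, hZ⟩ := exists_isNChotomicQC_ZG_eq (d := K + K) (by omega)
    (fun i => endWeight K i / √(2 * H)) (by
      simp only [div_pow, hs, ← Finset.sum_div]
      rw [sum_endWeight_sq, div_self (by positivity)])
  refine ⟨K + K, by omega, P, hP, ?_⟩
  have hform := endWeight_form_ge K
  have hscale (i j : Fin (K + K)) (C : ℝ) :
      endWeight K i / √(2 * H) * (endWeight K j / √(2 * H)) / C =
        endWeight K i * endWeight K j / C / (2 * H) := by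
    rw [div_mul_div_comm, ← sq, hs, div_right_comm]
  simp only [hscale, ← Finset.sum_div] at hZ
  rw [hZ]
  calc _ ≤ 2 - 4 / Real.pi * (Real.pi * H - 10) / (2 * H) := by gcongr
    _ = 20 / Real.pi / H := by
        field_simp
        ring
    _ < ε := by
        rw [div_lt_iff₀ (by positivity)] at hK
        rw [div_div, div_lt_iff₀ (by positivity)]
        linarith

/-- For every `n ≥ 1`, quantum correlations are not `n`-chotomic:
there are `m, r ≥ 1` and an `m`-chotomic quantum correlation `Q ∈ 𝒫₂[m,r]` whose
value of `I'` lies strictly below the infimum of `I'` over all `n`-chotomic quantum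
correlations with any number `r' ≥ 1` of outcomes. -/
theorem quantum_correlations_not_nchotomic (n : ℕ) (hn : 1 ≤ n) :
    ∃ (m r : ℕ), 1 ≤ m ∧ 1 ≤ r ∧
      ∃ Q : Fin 2 → Fin 2 → Fin r → Fin r → ℝ, IsNChotomicQC m r Q ∧
        ZG Q < sInf {x | ∃ (r' : ℕ) (P : Fin 2 → Fin 2 → Fin r' → Fin r' → ℝ),
          1 ≤ r' ∧ IsNChotomicQC n r' P ∧ ZG P = x} := by
  have hn' : (0 : ℝ) < n := by exact_mod_cast hn
  obtain ⟨d, hd, Q, hQ, hlt⟩ := exists_isNChotomicQC_ZG_lt (one_div_pos.mpr hn')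
  refine ⟨d, d, hd, hd, Q, hQ, hlt.trans_le (le_csInf ?_ ?_)⟩
  · obtain ⟨P, hP⟩ := exists_isNChotomicQC_one hn
    exact ⟨_, 1, P, le_rfl, hP, rfl⟩
  · rintro _ ⟨r, P, -, hP, rfl⟩
    rw [div_le_iff₀' hn']
    exact hP.one_le_mul_ZG
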